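/- arXiv:1311.4066 — 2 statements merged into one kernel-verified Lean document; each statement's English description precedes it below -/
import Mathlib

section
/- Let B = [[1,−1],[1/2,1/2]], so B⁻¹ = [[1/2,1],[−1/2,1]]. For every n ≥ 1, the change of basis of the n-arity EQUAL cogate C = ⟨0…0| + ⟨1…1| under (B,…,B), namely the vector C′(b) = Σ_{c∈{0,1}^n} C(c)·∏_{i=1}^n B⁻¹(cᵢ,bᵢ), equals 2·Σ_{b ∈ {0,1}^n with n−|b| even} (1/4)^{(n−|b|)/2} ⟨b|, where |b| denotes the number of ones in b. Moreover, for the n×n skew-symmetric matrix Θ with Θ_{ij} = 1/4 for all i < j, Pf(Θ|_K) = (1/4)^{|K|/2} for every K of even cardinality; consequently the n-arity EQUAL cogate is Pfaffian with C′ = 2·sPf*(Θ). -/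
/-!
The matrix `B⁻¹` has rows `(1/2, 1)` and `(-1/2, 1)`, so for a bitstring `b` with `k` zeros
the transformed EQUAL cogate is `C′(b) = (1/2)^k + (-1/2)^k`, which is `2 · (1/4)^(k/2)` for
even `k` and `0` for odd `k` (`cobCogate_equal`).

For the Pfaffians of `quarterSkew`, expand along the first row. By induction every term of the
expansion on `K` is `± (1/4)^(|K|/2)`, the sign of the column of rank `r` being `(-1)^r`. The ranks
run over `2, …, |K|` with `|K|` even, so the signs sum to `1` (`sum_erase_min_neg_one_pow_rank`)
and the Pfaffian is `(1/4)^(|K|/2)` (`subPfAux_quarterSkew`). Comparing coordinates with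
`K = (supp b)ᶜ`, which has `k` elements, gives `C′ = 2 · sPf*`.
-/

open scoped BigOperators

noncomputable section

/-- Change of basis on an `n`-arity gate: `((A₁⊗…⊗Aₙ)G)(b) = Σ_c (∏ᵢ Aᵢ(bᵢ,cᵢ))·G(c)`. -/
def cobGate {n : ℕ} (A : Fin n → Matrix (Fin 2) (Fin 2) ℂ) (G : (Fin n → Fin 2) → ℂ) :
    (Fin n → Fin 2) → ℂ :=
  fun b => ∑ c : Fin n → Fin 2, (∏ i, A i (b i) (c i)) * G c

/-- Change of basis on an `n`-arity cogate: `C′(b) = Σ_c C(c)·∏ᵢ Aᵢ⁻¹(cᵢ,bᵢ)`. -/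
def cobCogate {n : ℕ} (A : Fin n → Matrix (Fin 2) (Fin 2) ℂ) (C : (Fin n → Fin 2) → ℂ) :
    (Fin n → Fin 2) → ℂ :=
  fun b => ∑ c : Fin n → Fin 2, C c * ∏ i, (A i)⁻¹ (c i) (b i)

/-- The standard basis vector (ket/bra) at the bitstring `v`. -/
def ket {n : ℕ} (v : Fin n → Fin 2) : (Fin n → Fin 2) → ℂ :=
  fun b => if b = v then 1 else 0

/-- The support of a bitstring. -/
def supp {n : ℕ} (b : Fin n → Fin 2) : Finset (Fin n) :=
  Finset.univ.filter fun i => b i = 1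

/-- Fuel-driven Laplace expansion of the Pfaffian of a principal submatrix. -/
def subPfAux {n : ℕ} (Ξ : Matrix (Fin n) (Fin n) ℂ) : ℕ → Finset (Fin n) → ℂ
  | 0, I => if I = ∅ then 1 else 0
  | fuel + 1, I =>
    if hI : I.Nonempty then
      if Odd I.card then 0
      else
        ∑ i ∈ I.erase (I.min' hI),
          (-1 : ℂ) ^ (I.filter fun j => j ≤ i).card * Ξ (I.min' hI) i *
            subPfAux Ξ fuel ((I.erase (I.min' hI)).erase i)
    else 1

/-- `subPf Ξ I` is the Pfaffian `Pf(Ξ|_I)` of the principal submatrix of `Ξ` on the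
rows and columns in `I` (`1` on the empty set, `0` for odd `|I|`). -/
def subPf {n : ℕ} (Ξ : Matrix (Fin n) (Fin n) ℂ) (I : Finset (Fin n)) : ℂ :=
  subPfAux Ξ I.card I

/-- The sub-Pfaffian vector: coordinate `Pf(Ξ|_I)` at the bitstring with support `I`. -/
def sPf {n : ℕ} (Ξ : Matrix (Fin n) (Fin n) ℂ) : (Fin n → Fin 2) → ℂ :=
  fun b => subPf Ξ (supp b)

/-- The dual sub-Pfaffian vector: coordinate `Pf(Θ|_{Jᶜ})` at the bitstring with support `J`. -/
def sPfStar {n : ℕ} (Θ : Matrix (Fin n) (Fin n) ℂ) : (Fin n → Fin 2) → ℂ :=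
  fun b => subPf Θ (supp b)ᶜ

/-- A matrix is skew-symmetric. -/
def IsSkew {n : ℕ} (Ξ : Matrix (Fin n) (Fin n) ℂ) : Prop :=
  ∀ i j, Ξ j i = -Ξ i j

/-- A gate is Pfaffian under the change of basis `M`. -/
def IsPfaffGate {n : ℕ} (M : Fin n → Matrix (Fin 2) (Fin 2) ℂ) (G : (Fin n → Fin 2) → ℂ) : Prop :=
  ∃ (α : ℂ) (Ξ : Matrix (Fin n) (Fin n) ℂ), IsSkew Ξ ∧ cobGate M G = fun b => α * sPf Ξ b

/-- A cogate is Pfaffian under the change of basis `M`. -/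
def IsPfaffCogate {n : ℕ} (M : Fin n → Matrix (Fin 2) (Fin 2) ℂ) (C : (Fin n → Fin 2) → ℂ) : Prop :=
  ∃ (β : ℂ) (Θ : Matrix (Fin n) (Fin n) ℂ), IsSkew Θ ∧ cobCogate M C = fun b => β * sPfStar Θ b

def matB : Matrix (Fin 2) (Fin 2) ℂ := !![1, -1; 1/2, 1/2]

/-- The skew-symmetric matrix with `1/4` above the diagonal. -/
def quarterSkew (n : ℕ) : Matrix (Fin n) (Fin n) ℂ :=
  Matrix.of fun i j => if i < j then (1/4 : ℂ) else if j < i then -(1/4) else 0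

/-- The signs `-1, 1, -1, …` attached to the ranks `1, …, |I|` cancel in pairs. -/
theorem sum_neg_one_pow_rank {α : Type*} [LinearOrder α] (I : Finset α) :
    ∑ i ∈ I, (-1 : ℂ) ^ (I.filter fun j => j ≤ i).card = if Even I.card then 0 else -1 := by
  induction I using Finset.induction_on_max with
  | empty => simp
  | insert a s ha ih =>
    have has : a ∉ s := fun h => lt_irrefl _ (ha a h)
    -- A new maximum leaves the earlier ranks unchanged and itself has rank `s.card + 1`.
    have h1 : ∀ i ∈ s, ((insert a s).filter fun j => j ≤ i) = s.filter fun j => j ≤ i := by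
      intro i hi
      rw [Finset.filter_insert, if_neg (not_le.mpr (ha i hi))]
    have h2 : ((insert a s).filter fun j => j ≤ a) = insert a s := by
      refine Finset.filter_true_of_mem fun j hj => ?_
      rcases Finset.mem_insert.mp hj with rfl | hj
      · exact le_rfl
      · exact (ha j hj).le
    rw [Finset.sum_insert has, h2, Finset.sum_congr rfl fun i hi => by rw [h1 i hi], ih,
      Finset.card_insert_of_notMem has]
    by_cases h : Even s.card
    · have h' : ¬ Even (s.card + 1) := by simpa [Nat.even_add_one] using h
      simp [h, h', pow_succ, h.neg_one_pow]
    · have h' : Even (s.card + 1) := by simpa [Nat.even_add_one] using h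
      simp [h, h', h'.neg_one_pow]

/-- In the expansion of a Pfaffian along its first row, the signs add up to `1`: the column of
rank `k` has sign `(-1) ^ k`, and the ranks run from `2` to the even number `I.card`. -/
theorem sum_erase_min_neg_one_pow_rank {α : Type*} [LinearOrder α] (I : Finset α)
    (hI : I.Nonempty) (he : Even I.card) :
    ∑ i ∈ I.erase (I.min' hI), (-1 : ℂ) ^ (I.filter fun j => j ≤ i).card = 1 := by
  have h := sum_neg_one_pow_rank I
  rw [if_pos he, ← Finset.add_sum_erase _ _ (I.min'_mem hI)] at h
  have hmin : (I.filter fun j => j ≤ I.min' hI) = {I.min' hI} := by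
    ext j
    simp only [Finset.mem_filter, Finset.mem_singleton]
    constructor
    · rintro ⟨hj, hle⟩
      exact le_antisymm hle (I.min'_le j hj)
    · rintro rfl
      exact ⟨I.min'_mem hI, le_rfl⟩
  rw [hmin, Finset.card_singleton] at h
  linear_combination h

/-- The fuel only has to bound the cardinality, because each expansion step uses one unit of fuel
and removes two elements. -/
theorem subPfAux_quarterSkew {n : ℕ} (fuel : ℕ) (K : Finset (Fin n)) (hK : K.card ≤ fuel)
    (he : Even K.card) : subPfAux (quarterSkew n) fuel K = (1/4 : ℂ) ^ (K.card / 2) := by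
  induction fuel generalizing K with
  | zero =>
    have : K = ∅ := Finset.card_eq_zero.mp (by omega)
    subst this
    simp [subPfAux]
  | succ fuel ih =>
    by_cases hne : K.Nonempty
    · have hodd : ¬ Odd K.card := Nat.not_odd_iff_even.mpr he
      have hpos : 0 < K.card := hne.card_pos
      obtain ⟨m, hm⟩ := he
      have hterm : ∀ i ∈ K.erase (K.min' hne),
          (-1 : ℂ) ^ (K.filter fun j => j ≤ i).card * quarterSkew n (K.min' hne) i *
            subPfAux (quarterSkew n) fuel ((K.erase (K.min' hne)).erase i) =
          (-1 : ℂ) ^ (K.filter fun j => j ≤ i).card * (1/4 : ℂ) ^ (K.card / 2) := by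
        intro i hi
        have hlt : K.min' hne < i := K.min'_lt_of_mem_erase_min' hne hi
        have hc : ((K.erase (K.min' hne)).erase i).card = K.card - 2 := by
          rw [Finset.card_erase_of_mem hi, Finset.card_erase_of_mem (K.min'_mem hne)]
          omega
        have hq : quarterSkew n (K.min' hne) i = 1/4 := by
          simp only [quarterSkew, Matrix.of_apply, if_pos hlt]
        have hhalf : K.card / 2 = (K.card - 2) / 2 + 1 := by omega
        rw [ih _ (by omega) (by rw [hc]; exact ⟨m - 1, by omega⟩), hc, hq, hhalf, pow_succ]
        ring
      rw [subPfAux, dif_pos hne, if_neg hodd, Finset.sum_congr rfl hterm, ← Finset.sum_mul,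
        sum_erase_min_neg_one_pow_rank K hne ⟨m, hm⟩, one_mul]
    · rw [Finset.not_nonempty_iff_eq_empty] at hne
      subst hne
      simp [subPfAux]

theorem subPf_of_odd {n : ℕ} (Ξ : Matrix (Fin n) (Fin n) ℂ) (K : Finset (Fin n))
    (ho : Odd K.card) : subPf Ξ K = 0 := by
  have hne : K.Nonempty := Finset.card_pos.mp ho.pos
  obtain ⟨m, hm⟩ : ∃ m, K.card = m + 1 := ⟨K.card - 1, by have := ho.pos; omega⟩
  rw [subPf, hm, subPfAux, dif_pos hne, if_pos ho]

theorem matB_inv : matB⁻¹ = !![1/2, 1; -(1/2), 1] := by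
  apply Matrix.inv_eq_right_inv
  ext i j
  fin_cases i <;> fin_cases j <;> norm_num [matB, Matrix.mul_apply, Fin.sum_univ_two]

/-- A product over the positions of a bitstring whose factors at ones are `1` counts the zeros. -/
theorem prod_bits {n : ℕ} (b : Fin n → Fin 2) (f : Fin 2 → ℂ) (h1 : f 1 = 1) :
    ∏ i, f (b i) = f 0 ^ (n - (supp b).card) := by
  have hf : ∀ i, f (b i) = if i ∈ supp b then 1 else f 0 := by
    intro i
    have hb : b i = 0 ∨ b i = 1 := by omega
    rcases hb with h | h <;> simp [supp, h, h1]
  have hc : (Finset.univ.filter fun i => i ∉ supp b) = (supp b)ᶜ := by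
    ext i
    simp
  rw [Finset.prod_congr rfl fun i _ => hf i, Finset.prod_ite, Finset.prod_const_one, one_mul,
    Finset.prod_const, hc, Finset.card_compl, Fintype.card_fin]

theorem cobCogate_equal (n : ℕ) :
    cobCogate (fun _ : Fin n => matB) (ket (fun _ => 0) + ket (fun _ => 1)) =
      fun b => if Even (n - (supp b).card) then
          2 * (1/4 : ℂ) ^ ((n - (supp b).card) / 2) else 0 := by
  funext b
  have hsum : cobCogate (fun _ : Fin n => matB) (ket (fun _ => 0) + ket (fun _ => 1)) b =
      ∏ i, matB⁻¹ 0 (b i) + ∏ i, matB⁻¹ 1 (b i) := by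
    simp [cobCogate, ket, add_mul, Finset.sum_add_distrib]
  rw [hsum, prod_bits b (fun x => matB⁻¹ 0 x) (by simp [matB_inv]),
    prod_bits b (fun x => matB⁻¹ 1 x) (by simp [matB_inv])]
  generalize n - (supp b).card = k
  have h0 : matB⁻¹ 0 0 = 1/2 := by simp [matB_inv]
  have h1 : matB⁻¹ 1 0 = -(1/2) := by simp [matB_inv]
  simp only [h0, h1]
  split_ifs with hk
  · obtain ⟨m, rfl⟩ := hk
    have hm : (m + m) / 2 = m := by omega
    have hq : (1/4 : ℂ) = 1/2 * (1/2) := by norm_num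
    rw [Even.neg_pow ⟨m, rfl⟩, hm, hq, mul_pow, pow_add]
    ring
  · rw [Odd.neg_pow (Nat.not_even_iff_odd.mp hk), add_neg_cancel]

/-- cogate half of Proposition 3.1. -/
theorem stmt2 (n : ℕ) (hn : 1 ≤ n) :
    matB⁻¹ = !![1/2, 1; -(1/2), 1] ∧
    (cobCogate (fun _ : Fin n => matB) (ket (fun _ => 0) + ket (fun _ => 1)) =
      fun b => if Even (n - (supp b).card) then
          2 * (1/4 : ℂ) ^ ((n - (supp b).card) / 2) else 0) ∧
    (∀ K : Finset (Fin n), Even K.card → subPf (quarterSkew n) K = (1/4 : ℂ) ^ (K.card / 2)) ∧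
    (cobCogate (fun _ : Fin n => matB) (ket (fun _ => 0) + ket (fun _ => 1)) =
      fun b => 2 * sPfStar (quarterSkew n) b) := by
  refine ⟨matB_inv, cobCogate_equal n, fun K hK => subPfAux_quarterSkew _ K le_rfl hK, ?_⟩
  rw [cobCogate_equal]
  funext b
  have hc : (supp b)ᶜ.card = n - (supp b).card := by
    rw [Finset.card_compl, Fintype.card_fin]
  rw [sPfStar, ← hc]
  split_ifs with h
  · rw [subPf, subPfAux_quarterSkew _ _ le_rfl h]
  · rw [subPf_of_odd _ _ (Nat.not_even_iff_odd.mp h), mul_zero]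
end
end

section
/- The 4-arity SWAP gate G = |0000⟩ + |0101⟩ + |1010⟩ + |1111⟩ (i.e. G = Σ_{x,y∈{0,1}} |x,y,x,y⟩) is not Pfaffian under any change of basis: there do not exist invertible 2×2 complex matrices A, B, C, D, a scalar α ∈ ℂ, and a skew-symmetric matrix Ξ ∈ ℂ^{4×4} such that (A⊗B⊗C⊗D)G = α·sPf(Ξ). -/
/-!
In the new basis the SWAP gate factors as `H(a,b,c,d) = P(a,c) · Q(b,d)`, where `P = A Cᵀ` and
`Q = B Dᵀ` are invertible (`cobGate_swapGate`). A multiple of a sub-Pfaffian vector vanishes at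
bitstrings of odd weight and satisfies the matchgate identity (`sPf_matchgate`). Vanishing at odd
weight says that every diagonal entry of `P` (of `Q`) times every off-diagonal entry of `Q` (of `P`)
is zero, and the matchgate identity then reads `X = Y`, where `X` is the product of the four
diagonal entries of `P` and `Q` and `Y` that of the four off-diagonal ones. As `X * Y = 0`, both
vanish, so `det P * det Q = X + Y = 0`, a contradiction.
-/

open scoped BigOperators

noncomputable section

/-- The 4-arity SWAP gate `Σ_{x,y} |x,y,x,y⟩`. -/
def swapGate : (Fin 4 → Fin 2) → ℂ :=
  ket ![0, 0, 0, 0] + ket ![0, 1, 0, 1] + ket ![1, 0, 1, 0] + ket ![1, 1, 1, 1]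

lemma cobGate_swapGate (A B C D : Matrix (Fin 2) (Fin 2) ℂ) (a b c d : Fin 2) :
    cobGate ![A, B, C, D] swapGate ![a, b, c, d]
      = (A * C.transpose) a c * (B * D.transpose) b d := by
  simp only [cobGate, swapGate, ket, Pi.add_apply, mul_add, Finset.sum_add_distrib, mul_ite,
    mul_one, mul_zero, Finset.sum_ite_eq', Finset.mem_univ, if_true, Fin.prod_univ_four,
    Matrix.mul_apply, Fin.sum_univ_two, Matrix.transpose_apply]
  change A a 0 * B b 0 * C c 0 * D d 0 + A a 0 * B b 1 * C c 0 * D d 1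
    + A a 1 * B b 0 * C c 1 * D d 0 + A a 1 * B b 1 * C c 1 * D d 1 = _
  ring

lemma sPf_odd {n : ℕ} (Ξ : Matrix (Fin n) (Fin n) ℂ) (b : Fin n → Fin 2)
    (h : Odd (supp b).card) : sPf Ξ b = 0 := by
  have hI : (supp b).Nonempty := Finset.card_pos.mp h.pos
  obtain ⟨k, hk⟩ := Nat.exists_eq_succ_of_ne_zero h.pos.ne'
  rw [sPf, subPf, hk]
  simp only [subPfAux, hI, h, dif_pos, if_true]

/-- One step of the expansion, with the minimum `m` of `I` and the remaining elements `J` given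
explicitly. -/
lemma subPfAux_succ {n : ℕ} (Ξ : Matrix (Fin n) (Fin n) ℂ) (k : ℕ) (I J : Finset (Fin n))
    (m : Fin n) (hm : m ∈ I) (hmin : ∀ j ∈ I, m ≤ j) (he : ¬ Odd I.card) (hJ : I.erase m = J) :
    subPfAux Ξ (k + 1) I = ∑ i ∈ J, (-1 : ℂ) ^ (I.filter fun j => j ≤ i).card * Ξ m i *
      subPfAux Ξ k (J.erase i) := by
  have hI : I.Nonempty := ⟨m, hm⟩
  have hmm : I.min' hI = m := le_antisymm (Finset.min'_le _ _ hm) (Finset.le_min' _ _ _ hmin)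
  simp only [subPfAux, hI, he, dif_pos, if_false, hmm, hJ]

lemma subPfAux_empty {n : ℕ} (Ξ : Matrix (Fin n) (Fin n) ℂ) (k : ℕ) : subPfAux Ξ k ∅ = 1 := by
  cases k <;> simp [subPfAux]

lemma subPfAux_pair {n : ℕ} (Ξ : Matrix (Fin n) (Fin n) ℂ) (k : ℕ) {i j : Fin n} (h : i < j) :
    subPfAux Ξ (k + 1) {i, j} = Ξ i j := by
  have hf : ({i, j} : Finset (Fin n)).filter (fun l => l ≤ j) = {i, j} := by
    ext l
    simp only [Finset.mem_filter, Finset.mem_insert, Finset.mem_singleton, and_iff_left_iff_imp]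
    rintro (rfl | rfl)
    exacts [h.le, le_rfl]
  rw [subPfAux_succ Ξ k {i, j} {j} i (by simp) (by simp [h.le])
    (by rw [Finset.card_pair h.ne]; decide) (by simp [h.ne])]
  simp [subPfAux_empty, hf, Finset.card_pair h.ne]

lemma sPf_pair {n : ℕ} (Ξ : Matrix (Fin n) (Fin n) ℂ) (b : Fin n → Fin 2) {i j : Fin n}
    (h : i < j) (hb : supp b = {i, j}) : sPf Ξ b = Ξ i j := by
  rw [sPf, hb, subPf, Finset.card_pair h.ne, subPfAux_pair Ξ 1 h]

lemma sPf_zero (Ξ : Matrix (Fin 4) (Fin 4) ℂ) : sPf Ξ ![0, 0, 0, 0] = 1 := by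
  rw [sPf, show supp ![0, 0, 0, 0] = (∅ : Finset (Fin 4)) by decide, subPf, subPfAux_empty]

lemma sPf_full (Ξ : Matrix (Fin 4) (Fin 4) ℂ) :
    sPf Ξ ![1, 1, 1, 1] = Ξ 0 1 * Ξ 2 3 - Ξ 0 2 * Ξ 1 3 + Ξ 0 3 * Ξ 1 2 := by
  rw [sPf, show supp ![1, 1, 1, 1] = ({0, 1, 2, 3} : Finset (Fin 4)) by decide, subPf,
    show ({0, 1, 2, 3} : Finset (Fin 4)).card = 3 + 1 by decide,
    subPfAux_succ Ξ 3 _ {1, 2, 3} 0 (by decide) (by decide) (by decide) (by decide),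
    Finset.sum_insert (by decide), Finset.sum_insert (by decide), Finset.sum_singleton,
    show ({1, 2, 3} : Finset (Fin 4)).erase 1 = {2, 3} by decide,
    show ({1, 2, 3} : Finset (Fin 4)).erase 2 = {1, 3} by decide,
    show ({1, 2, 3} : Finset (Fin 4)).erase 3 = {1, 2} by decide,
    subPfAux_pair Ξ 2 (by decide), subPfAux_pair Ξ 2 (by decide), subPfAux_pair Ξ 2 (by decide),
    show (({0, 1, 2, 3} : Finset (Fin 4)).filter fun j => j ≤ 1).card = 2 by decide,
    show (({0, 1, 2, 3} : Finset (Fin 4)).filter fun j => j ≤ 2).card = 3 by decide,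
    show (({0, 1, 2, 3} : Finset (Fin 4)).filter fun j => j ≤ 3).card = 4 by decide]
  ring

/-- The matchgate identity: the quadratic relation among the even coordinates that expresses the
expansion of the `4 × 4` Pfaffian. -/
lemma sPf_matchgate (Ξ : Matrix (Fin 4) (Fin 4) ℂ) :
    sPf Ξ ![0, 0, 0, 0] * sPf Ξ ![1, 1, 1, 1] =
      sPf Ξ ![1, 1, 0, 0] * sPf Ξ ![0, 0, 1, 1] - sPf Ξ ![1, 0, 1, 0] * sPf Ξ ![0, 1, 0, 1]
        + sPf Ξ ![1, 0, 0, 1] * sPf Ξ ![0, 1, 1, 0] := by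
  rw [sPf_zero, sPf_full, sPf_pair Ξ ![1, 1, 0, 0] (i := 0) (j := 1) (by decide) (by decide),
    sPf_pair Ξ ![0, 0, 1, 1] (i := 2) (j := 3) (by decide) (by decide),
    sPf_pair Ξ ![1, 0, 1, 0] (i := 0) (j := 2) (by decide) (by decide),
    sPf_pair Ξ ![0, 1, 0, 1] (i := 1) (j := 3) (by decide) (by decide),
    sPf_pair Ξ ![1, 0, 0, 1] (i := 0) (j := 3) (by decide) (by decide),
    sPf_pair Ξ ![0, 1, 1, 0] (i := 1) (j := 2) (by decide) (by decide), one_mul]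

/-- Theorem 5.1.1: SWAP is not Pfaffian under any change of basis. -/
theorem stmt12 :
    ¬ ∃ (A B C D : Matrix (Fin 2) (Fin 2) ℂ) (α : ℂ) (Ξ : Matrix (Fin 4) (Fin 4) ℂ),
      IsUnit A.det ∧ IsUnit B.det ∧ IsUnit C.det ∧ IsUnit D.det ∧ IsSkew Ξ ∧
      cobGate ![A, B, C, D] swapGate = fun b => α * sPf Ξ b := by
  rintro ⟨A, B, C, D, α, Ξ, hA, hB, hC, hD, -, h⟩
  have key : ∀ a b c d : Fin 2, (A * C.transpose) a c * (B * D.transpose) b d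
      = α * sPf Ξ ![a, b, c, d] := fun a b c d => by
    rw [← cobGate_swapGate, h]
  have hP : (A * C.transpose).det ≠ 0 := by
    rw [Matrix.det_mul, Matrix.det_transpose]
    exact mul_ne_zero hA.ne_zero hC.ne_zero
  have hQ : (B * D.transpose).det ≠ 0 := by
    rw [Matrix.det_mul, Matrix.det_transpose]
    exact mul_ne_zero hB.ne_zero hD.ne_zero
  generalize A * C.transpose = P at *
  generalize B * D.transpose = Q at *
  have odd : ∀ a b c d : Fin 2, Odd (supp ![a, b, c, d]).card → P a c * Q b d = 0 :=
    fun a b c d ho => by rw [key, sPf_odd Ξ _ ho, mul_zero]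
  have hdo : P 0 0 * Q 0 1 = 0 := odd 0 0 0 1 (by decide)
  have hod : P 0 1 * Q 0 0 = 0 := odd 0 0 1 0 (by decide)
  have match_id : P 0 0 * Q 0 0 * (P 1 1 * Q 1 1) = P 1 0 * Q 1 0 * (P 0 1 * Q 0 1)
      - P 1 1 * Q 0 0 * (P 0 0 * Q 1 1) + P 1 0 * Q 0 1 * (P 0 1 * Q 1 0) := by
    rw [key 0 0 0 0, key 1 1 1 1, key 1 1 0 0, key 0 0 1 1, key 1 0 1 0, key 0 1 0 1,
      key 1 0 0 1, key 0 1 1 0]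
    linear_combination α ^ 2 * sPf_matchgate Ξ
  have hXY : P 0 0 * P 1 1 * Q 0 0 * Q 1 1 = P 0 1 * P 1 0 * Q 0 1 * Q 1 0 := by
    linear_combination match_id / 2
  have hX : P 0 0 * P 1 1 * Q 0 0 * Q 1 1 = 0 := by
    rw [← mul_self_eq_zero]
    linear_combination (P 0 0 * P 1 1 * Q 0 0 * Q 1 1) * hXY
      + P 1 1 * Q 0 0 * Q 1 1 * P 0 1 * P 1 0 * Q 1 0 * hdo
  refine mul_ne_zero hP hQ ?_
  rw [Matrix.det_fin_two, Matrix.det_fin_two]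
  linear_combination 2 * hX - hXY - P 1 1 * Q 1 0 * hdo - P 1 0 * Q 1 1 * hod
end
end
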